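/- In the linear model (p_k = k/m for all 0 ≤ k ≤ m) with X_0 > 0 and Y_0 > 0, the almost sure limit a = lim_{n→∞} a_n has full support on [0,1]: for every interval (r, r+ε) ⊂ (0,1) with ε > 0, one has P(a ∈ (r, r+ε)) > 0. -/

import Mathlib

open MeasureTheory ProbabilityTheory Filter Set

noncomputable section

/-- The polynomial `P(z) = (1/2) ∑_{k=0}^m C(m,k) z^k (1-z)^{m-k} (p_k - k/m)`. -/
def polyP (m : ℕ) (p : ℕ → ℝ) (z : ℝ) : ℝ :=
  (1 / 2) * ∑ k ∈ Finset.range (m + 1),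
    (m.choose k : ℝ) * z ^ k * (1 - z) ^ (m - k) * (p k - (k : ℝ) / m)

/-- The zero set `Z_P = {z ∈ [0,1] : P(z) = 0}`. -/
def zeroSetP (m : ℕ) (p : ℕ → ℝ) : Set ℝ :=
  {z ∈ Set.Icc (0 : ℝ) 1 | polyP m p z = 0}

/-- The two-type preferential attachment process with `m` edges per new node and type
adoption parameters `p 0, …, p m`, defined on a probability space `(Ω, μ)` with filtration
`F`.  `A n` is the number of red nodes and `X n` the sum of the degrees of red nodes at time
`n`; the transition probabilities given `F n` are those of the model: a number `k` of red
neighbours is drawn from the `Binomial(m, x_n)` distribution, and then the new node is red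
with probability `p k` (adding `1` to the red nodes and `k + m` to the red degrees) and blue
with probability `1 - p k` (adding `k` to the red degrees). -/
structure PAProcess (Ω : Type) [MeasurableSpace Ω] where
  μ : Measure Ω
  isProb : IsProbabilityMeasure μ
  m : ℕ
  hm : 1 ≤ m
  p : ℕ → ℝ
  hp : ∀ k ≤ m, p k ∈ Set.Icc (0 : ℝ) 1
  A : ℕ → Ω → ℕ
  X : ℕ → Ω → ℕ
  F : Filtration ℕ ‹MeasurableSpace Ω›
  A0 : ℕ
  B0 : ℕ
  X0 : ℕ
  Y0 : ℕ
  hA0 : ∀ ω, A 0 ω = A0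
  hX0 : ∀ ω, X 0 ω = X0
  adaptedA : ∀ n, Measurable[F n] (A n)
  adaptedX : ∀ n, Measurable[F n] (X n)
  hXle : ∀ n ω, X n ω ≤ X0 + Y0 + 2 * m * n
  step_red : ∀ n, ∀ k ≤ m,
    μ[Set.indicator {ω | A (n + 1) ω = A n ω + 1 ∧ X (n + 1) ω = X n ω + k + m}
        (fun _ => (1 : ℝ)) | F n]
      =ᵐ[μ] fun ω => (m.choose k : ℝ) *
        ((X n ω : ℝ) / ((X0 : ℝ) + Y0 + 2 * m * n)) ^ k *
        (1 - (X n ω : ℝ) / ((X0 : ℝ) + Y0 + 2 * m * n)) ^ (m - k) * p k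
  step_blue : ∀ n, ∀ k ≤ m,
    μ[Set.indicator {ω | A (n + 1) ω = A n ω ∧ X (n + 1) ω = X n ω + k}
        (fun _ => (1 : ℝ)) | F n]
      =ᵐ[μ] fun ω => (m.choose k : ℝ) *
        ((X n ω : ℝ) / ((X0 : ℝ) + Y0 + 2 * m * n)) ^ k *
        (1 - (X n ω : ℝ) / ((X0 : ℝ) + Y0 + 2 * m * n)) ^ (m - k) * (1 - p k)

namespace PAProcess

variable {Ω : Type} [MeasurableSpace Ω] (P : PAProcess Ω)

/-- Total degree `S_n = S_0 + 2mn`. -/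
def S (n : ℕ) : ℕ := P.X0 + P.Y0 + 2 * P.m * n

/-- Normalized red degree `x_n = X_n / S_n`. -/
def x (n : ℕ) (ω : Ω) : ℝ := (P.X n ω : ℝ) / (P.S n : ℝ)

/-- Normalized red node count `a_n = A_n / (A_0 + B_0 + n)`. -/
def a (n : ℕ) (ω : Ω) : ℝ := (P.A n ω : ℝ) / ((P.A0 : ℝ) + P.B0 + n)

/-- The polynomial `P` of the process. -/
def poly : ℝ → ℝ := polyP P.m P.p

/-- The zero set `Z_P` of the process. -/
def Zp : Set ℝ := zeroSetP P.m P.p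

end PAProcess

theorem measReal_pos {Ω : Type} [MeasurableSpace Ω] (μ : Measure Ω) [IsProbabilityMeasure μ]
    (s : Set Ω) : 0 < μ.real s ↔ 0 < μ s := by
  rw [Measure.real, ENNReal.toReal_pos_iff]
  exact ⟨fun h => h.1, fun h => ⟨h, measure_lt_top _ _⟩⟩

/-- One step of an orthogonal-increment second moment bound. -/
theorem var_step {Ω : Type} (m1 : MeasurableSpace Ω) {m0 : MeasurableSpace Ω}
    (μ : Measure Ω) [IsProbabilityMeasure μ] (hm : m1 ≤ m0) (E : Set Ω) (hE : MeasurableSet[m1] E)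
    (U D : Ω → ℝ) (hU : Measurable[m1] U) (hD : Measurable D) (c K : ℝ)
    (hUK : ∀ᵐ ω ∂μ, |U ω| ≤ K) (hDc : ∀ᵐ ω ∂μ, |D ω| ≤ c)
    (h0 : μ[D | m1] =ᵐ[μ] 0) :
    ∫ ω in E, (U ω + D ω) ^ 2 ∂μ ≤ ∫ ω in E, (U ω) ^ 2 ∂μ + c ^ 2 * μ.real E := by
  have hU' : Measurable U := hU.mono hm le_rfl
  have iU2 : Integrable (fun ω => (U ω) ^ 2) μ := by
    refine Integrable.of_bound (by fun_prop) (K ^ 2) ?_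
    filter_upwards [hUK] with ω h
    rw [Real.norm_eq_abs, abs_pow]
    exact pow_le_pow_left₀ (abs_nonneg _) h 2
  have iD2 : Integrable (fun ω => (D ω) ^ 2) μ := by
    refine Integrable.of_bound (by fun_prop) (c ^ 2) ?_
    filter_upwards [hDc] with ω h
    rw [Real.norm_eq_abs, abs_pow]
    exact pow_le_pow_left₀ (abs_nonneg _) h 2
  have iD : Integrable D μ := Integrable.of_bound (by fun_prop) c (by simpa using hDc)
  have iUD : Integrable (U * D) μ := by
    refine Integrable.of_bound (by fun_prop) (K * c) ?_
    filter_upwards [hDc, hUK] with ω h h'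
    rw [Real.norm_eq_abs, Pi.mul_apply, abs_mul]
    exact mul_le_mul h' h (abs_nonneg _) ((abs_nonneg _).trans h')
  have hz : ∫ ω in E, (U * D) ω ∂μ = 0 := by
    rw [← setIntegral_condExp hm iUD hE]
    have h1 : μ[U * D | m1] =ᵐ[μ] U * μ[D | m1] :=
      condExp_mul_of_stronglyMeasurable_left hU.stronglyMeasurable iUD iD
    have h2 : μ[U * D | m1] =ᵐ[μ] 0 := by
      filter_upwards [h1, h0] with ω h h'
      simp [h, h']
    rw [integral_congr_ae (ae_restrict_of_ae h2)]
    simp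
  have hD2 : ∫ ω in E, (D ω) ^ 2 ∂μ ≤ c ^ 2 * μ.real E := by
    have : ∫ ω in E, (D ω) ^ 2 ∂μ ≤ ∫ ω in E, c ^ 2 ∂μ := by
      refine setIntegral_mono_ae iD2.integrableOn (by simp) ?_
      filter_upwards [hDc] with ω h
      rw [← sq_abs]
      exact pow_le_pow_left₀ (abs_nonneg _) h 2
    refine this.trans (le_of_eq ?_)
    simp [mul_comm]
  have : ∫ ω in E, (U ω + D ω) ^ 2 ∂μ
      = ∫ ω in E, (U ω) ^ 2 ∂μ + 2 * ∫ ω in E, (U * D) ω ∂μ + ∫ ω in E, (D ω) ^ 2 ∂μ := by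
    rw [← integral_const_mul, ← integral_add iU2.integrableOn (iUD.integrableOn.const_mul 2),
      ← integral_add (f := fun ω => U ω ^ 2 + 2 * (U * D) ω)
        (iU2.add (iUD.const_mul 2)).restrict iD2.restrict]
    congr 1
    ext ω
    simp
    ring
  rw [this, hz]
  linarith

theorem bern_sum (m : ℕ) (x : ℝ) :
    ∑ k ∈ Finset.range (m + 1), (m.choose k : ℝ) * x ^ k * (1 - x) ^ (m - k) = 1 := by
  have := congrArg (Polynomial.eval x) (bernsteinPolynomial.sum ℝ m)
  simpa [bernsteinPolynomial, Polynomial.eval_finsetSum] using this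

theorem bern_sum_k (m : ℕ) (x : ℝ) :
    ∑ k ∈ Finset.range (m + 1), (k : ℝ) * ((m.choose k : ℝ) * x ^ k * (1 - x) ^ (m - k))
      = m * x := by
  have := congrArg (Polynomial.eval x) (bernsteinPolynomial.sum_smul ℝ m)
  simpa [bernsteinPolynomial, Polynomial.eval_finsetSum] using this

namespace PAProcess

variable {Ω : Type} [MeasurableSpace Ω] (P : PAProcess Ω)

theorem mA (n : ℕ) : Measurable (P.A n) := (P.adaptedA n).mono (P.F.le n) le_rfl

theorem mX (n : ℕ) : Measurable (P.X n) := (P.adaptedX n).mono (P.F.le n) le_rfl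

def redE (n k : ℕ) : Set Ω :=
  {ω | P.A (n + 1) ω = P.A n ω + 1 ∧ P.X (n + 1) ω = P.X n ω + k + P.m}

def blueE (n k : ℕ) : Set Ω :=
  {ω | P.A (n + 1) ω = P.A n ω ∧ P.X (n + 1) ω = P.X n ω + k}

theorem mred (n k : ℕ) : MeasurableSet (P.redE n k) := by
  have h1 := P.mA n
  have h2 := P.mA (n + 1)
  have h3 := P.mX n
  have h4 := P.mX (n + 1)
  exact (measurableSet_eq_fun h2 (by fun_prop)).inter (measurableSet_eq_fun h4 (by fun_prop))

theorem mblue (n k : ℕ) : MeasurableSet (P.blueE n k) := by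
  have h1 := P.mA n
  have h2 := P.mA (n + 1)
  have h3 := P.mX n
  have h4 := P.mX (n + 1)
  exact (measurableSet_eq_fun h2 (by fun_prop)).inter (measurableSet_eq_fun h4 (by fun_prop))

theorem x_eq (n : ℕ) (ω : Ω) :
    P.x n ω = (P.X n ω : ℝ) / ((P.X0 : ℝ) + P.Y0 + 2 * P.m * n) := by
  simp [x, S]

def q (n k : ℕ) (ω : Ω) : ℝ :=
  (P.m.choose k : ℝ) * (P.x n ω) ^ k * (1 - P.x n ω) ^ (P.m - k)

theorem cred (n k : ℕ) (hk : k ≤ P.m) :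
    P.μ[(P.redE n k).indicator (fun _ => (1 : ℝ)) | P.F n]
      =ᵐ[P.μ] fun ω => P.q n k ω * P.p k := by
  have := P.step_red n k hk
  simp only [q, x_eq]
  exact this

theorem cblue (n k : ℕ) (hk : k ≤ P.m) :
    P.μ[(P.blueE n k).indicator (fun _ => (1 : ℝ)) | P.F n]
      =ᵐ[P.μ] fun ω => P.q n k ω * (1 - P.p k) := by
  have := P.step_blue n k hk
  simp only [q, x_eq]
  exact this

/-- A linear functional of the step indicators. -/
def lin (n : ℕ) (c d : ℕ → ℝ) : Ω → ℝ :=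
  ∑ k ∈ Finset.range (P.m + 1), (c k • (P.redE n k).indicator (fun _ => (1 : ℝ))
    + d k • (P.blueE n k).indicator (fun _ => (1 : ℝ)))

theorem int_ind [IsProbabilityMeasure P.μ] {s : Set Ω} (hs : MeasurableSet s) :
    Integrable (s.indicator (fun _ => (1 : ℝ))) P.μ :=
  (integrable_const 1).indicator hs

theorem int_lin (n : ℕ) (c d : ℕ → ℝ) : Integrable (P.lin n c d) P.μ := by
  have := P.isProb
  exact integrable_finsetSum' _ fun k _ =>
    ((P.int_ind (P.mred n k)).smul (c k)).add ((P.int_ind (P.mblue n k)).smul (d k))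

theorem cond_lin (n : ℕ) (c d : ℕ → ℝ) :
    P.μ[P.lin n c d | P.F n] =ᵐ[P.μ] fun ω =>
      ∑ k ∈ Finset.range (P.m + 1), (c k * (P.q n k ω * P.p k)
        + d k * (P.q n k ω * (1 - P.p k))) := by
  have := P.isProb
  have h1 := condExp_finsetSum (μ := P.μ) (s := Finset.range (P.m + 1))
    (f := fun k => (c k • (P.redE n k).indicator (fun _ => (1 : ℝ))
    + d k • (P.blueE n k).indicator (fun _ => (1 : ℝ)))) (fun k _ =>
    ((P.int_ind (P.mred n k)).smul (c k)).add ((P.int_ind (P.mblue n k)).smul (d k))) (P.F n)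
  have h2 : ∀ k, ∀ᵐ ω ∂P.μ, k ∈ Finset.range (P.m + 1) →
      (P.μ[(c k • (P.redE n k).indicator (fun _ => (1 : ℝ))
        + d k • (P.blueE n k).indicator (fun _ => (1 : ℝ))) | P.F n]) ω
      = c k * (P.q n k ω * P.p k) + d k * (P.q n k ω * (1 - P.p k)) := by
    intro k
    by_cases hk : k ∈ Finset.range (P.m + 1)
    · have hk' : k ≤ P.m := Nat.lt_succ_iff.mp (Finset.mem_range.mp hk)
      filter_upwards [condExp_add ((P.int_ind (P.mred n k)).smul (c k))
        ((P.int_ind (P.mblue n k)).smul (d k)) (P.F n),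
        condExp_smul (μ := P.μ) (c k) ((P.redE n k).indicator (fun _ => (1 : ℝ))) (P.F n),
        condExp_smul (μ := P.μ) (d k) ((P.blueE n k).indicator (fun _ => (1 : ℝ))) (P.F n),
        P.cred n k hk', P.cblue n k hk'] with ω e1 e2 e3 e4 e5 _
      rw [e1, Pi.add_apply, e2, e3, Pi.smul_apply, Pi.smul_apply, e4, e5]
      simp
    · exact Filter.Eventually.of_forall fun ω h => absurd h hk
  filter_upwards [h1, ae_all_iff.mpr h2] with ω e1 e2
  unfold lin
  rw [e1, Finset.sum_apply]
  exact Finset.sum_congr rfl fun k hk => e2 k hk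

theorem lin_red (n : ℕ) (c d : ℕ → ℝ) (k : ℕ) (hk : k ≤ P.m) (ω : Ω) (h : ω ∈ P.redE n k) :
    P.lin n c d ω = c k := by
  have h' : P.A (n + 1) ω = P.A n ω + 1 ∧ P.X (n + 1) ω = P.X n ω + k + P.m := h
  unfold lin
  rw [Finset.sum_apply, Finset.sum_eq_single k]
  · have : ω ∉ P.blueE n k := fun hb => by
      have hb' : P.A (n + 1) ω = P.A n ω ∧ P.X (n + 1) ω = P.X n ω + k := hb
      omega
    simp [h, this]
  · intro j _ hj
    have h1 : ω ∉ P.blueE n j := fun hb => by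
      have hb' : P.A (n + 1) ω = P.A n ω ∧ P.X (n + 1) ω = P.X n ω + j := hb
      omega
    have h2 : ω ∉ P.redE n j := fun hb => by
      have hb' : P.A (n + 1) ω = P.A n ω + 1 ∧ P.X (n + 1) ω = P.X n ω + j + P.m := hb
      omega
    simp [h1, h2]
  · intro hn
    exact absurd (Finset.mem_range.mpr (Nat.lt_succ_of_le hk)) hn

theorem lin_blue (n : ℕ) (c d : ℕ → ℝ) (k : ℕ) (hk : k ≤ P.m) (ω : Ω) (h : ω ∈ P.blueE n k) :
    P.lin n c d ω = d k := by
  have h' : P.A (n + 1) ω = P.A n ω ∧ P.X (n + 1) ω = P.X n ω + k := h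
  unfold lin
  rw [Finset.sum_apply, Finset.sum_eq_single k]
  · have : ω ∉ P.redE n k := fun hb => by
      have hb' : P.A (n + 1) ω = P.A n ω + 1 ∧ P.X (n + 1) ω = P.X n ω + k + P.m := hb
      omega
    simp [h, this]
  · intro j _ hj
    have h1 : ω ∉ P.blueE n j := fun hb => by
      have hb' : P.A (n + 1) ω = P.A n ω ∧ P.X (n + 1) ω = P.X n ω + j := hb
      omega
    have h2 : ω ∉ P.redE n j := fun hb => by
      have hb' : P.A (n + 1) ω = P.A n ω + 1 ∧ P.X (n + 1) ω = P.X n ω + j + P.m := hb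
      omega
    simp [h1, h2]
  · intro hn
    exact absurd (Finset.mem_range.mpr (Nat.lt_succ_of_le hk)) hn

/-- Almost surely, one of the transitions of the model occurs. -/
theorem ae_step (n : ℕ) :
    ∀ᵐ ω ∂P.μ, ∃ k ≤ P.m, ω ∈ P.redE n k ∨ ω ∈ P.blueE n k := by
  have := P.isProb
  have hi := P.int_lin n (fun _ => 1) (fun _ => 1)
  have hc := P.cond_lin n (fun _ => 1) (fun _ => 1)
  have h1 : ∫ ω, P.lin n (fun _ => 1) (fun _ => 1) ω ∂P.μ = 1 := by
    rw [← integral_condExp (P.F.le n), integral_congr_ae hc]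
    have : ∀ ω, ∑ k ∈ Finset.range (P.m + 1), ((1 : ℝ) * (P.q n k ω * P.p k)
        + 1 * (P.q n k ω * (1 - P.p k))) = 1 := by
      intro ω
      refine Eq.trans ?_ (bern_sum P.m (P.x n ω))
      refine Finset.sum_congr rfl fun k _ => ?_
      unfold q
      ring
    simp only [this]
    simp
  have hnot : ∀ ω, (¬ ∃ k ≤ P.m, ω ∈ P.redE n k ∨ ω ∈ P.blueE n k) →
      P.lin n (fun _ => 1) (fun _ => 1) ω = 0 := by
    intro ω h
    push Not at h
    unfold lin
    rw [Finset.sum_apply]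
    refine Finset.sum_eq_zero fun k hk => ?_
    have := h k (Nat.lt_succ_iff.mp (Finset.mem_range.mp hk))
    simp [this.1, this.2]
  have hle : 0 ≤ fun ω => 1 - P.lin n (fun _ => 1) (fun _ => 1) ω := by
    intro ω
    by_cases h : ∃ k ≤ P.m, ω ∈ P.redE n k ∨ ω ∈ P.blueE n k
    · obtain ⟨k, hk, h | h⟩ := h
      · simp [P.lin_red n _ _ k hk ω h]
      · simp [P.lin_blue n _ _ k hk ω h]
    · simp [hnot ω h]
  have h0 : ∫ ω, (1 - P.lin n (fun _ => 1) (fun _ => 1) ω) ∂P.μ = 0 := by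
    rw [integral_sub (integrable_const _) hi, h1]
    simp
  rw [integral_eq_zero_iff_of_nonneg hle ((integrable_const _).sub hi)] at h0
  filter_upwards [h0] with ω h
  by_contra hn
  have := hnot ω hn
  simp [this] at h

theorem S_pos (hX0 : 0 < P.X0) (n : ℕ) : (0 : ℝ) < P.S n := by
  have : 0 < P.S n := by unfold S; omega
  exact_mod_cast this

theorem x_nonneg (n : ℕ) (ω : Ω) : 0 ≤ P.x n ω := by unfold x; positivity

theorem x_le_one (n : ℕ) (ω : Ω) : P.x n ω ≤ 1 := by
  unfold x
  refine div_le_one_of_le₀ ?_ (by positivity)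
  exact_mod_cast P.hXle n ω

theorem mx (n : ℕ) : Measurable[P.F n] (P.x n) := by
  unfold x
  have h : Measurable[P.F n] (fun ω => (P.X n ω : ℝ)) :=
    (measurable_of_countable (fun k : ℕ => (k : ℝ))).comp (P.adaptedX n)
  exact h.div_const _

theorem mAr (n : ℕ) : Measurable[P.F n] (fun ω => (P.A n ω : ℝ)) :=
  (measurable_of_countable (fun k : ℕ => (k : ℝ))).comp (P.adaptedA n)

theorem int_x (n : ℕ) : Integrable (P.x n) P.μ := by
  have := P.isProb
  refine Integrable.of_bound ((P.mx n).mono (P.F.le n) le_rfl).aestronglyMeasurable 1 ?_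
  refine Filter.Eventually.of_forall fun ω => ?_
  rw [Real.norm_eq_abs, abs_of_nonneg (P.x_nonneg n ω)]
  exact P.x_le_one n ω

/-- The centered red indicator. -/
theorem cond_A (hlin : ∀ k ≤ P.m, P.p k = (k : ℝ) / P.m) (n : ℕ) :
    P.μ[fun ω => (P.A (n + 1) ω : ℝ) - P.A n ω - P.x n ω | P.F n] =ᵐ[P.μ] 0 := by
  have := P.isProb
  have hm : (P.m : ℝ) ≠ 0 := by
    have := P.hm
    positivity
  have e : (fun ω => (P.A (n + 1) ω : ℝ) - P.A n ω - P.x n ω) =ᵐ[P.μ]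
      P.lin n (fun _ => 1) (fun _ => 0) - P.x n := by
    filter_upwards [P.ae_step n] with ω ⟨k, hk, h⟩
    rcases h with h | h
    · rw [Pi.sub_apply, P.lin_red n _ _ k hk ω h, h.1]
      push_cast
      ring
    · rw [Pi.sub_apply, P.lin_blue n _ _ k hk ω h, h.1]
      ring
  refine (condExp_congr_ae e).trans ?_
  filter_upwards [condExp_sub (P.int_lin n (fun _ => 1) (fun _ => 0)) (P.int_x n) (P.F n),
    P.cond_lin n (fun _ => 1) (fun _ => 0)] with ω e1 e2
  rw [e1, Pi.sub_apply, e2,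
    condExp_of_stronglyMeasurable (P.F.le n) (P.mx n).stronglyMeasurable (P.int_x n)]
  have h := bern_sum_k P.m (P.x n ω)
  have : ∑ k ∈ Finset.range (P.m + 1), ((1 : ℝ) * (P.q n k ω * P.p k)
      + 0 * (P.q n k ω * (1 - P.p k))) = (P.m * P.x n ω) / P.m := by
    rw [← h, Finset.sum_div]
    refine Finset.sum_congr rfl fun k hk => ?_
    rw [hlin k (Nat.lt_succ_iff.mp (Finset.mem_range.mp hk))]
    unfold q
    ring
  rw [this]
  field_simp
  simp

theorem cond_X (hlin : ∀ k ≤ P.m, P.p k = (k : ℝ) / P.m) (hX0 : 0 < P.X0) (n : ℕ) :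
    P.μ[fun ω => P.x (n + 1) ω - P.x n ω | P.F n] =ᵐ[P.μ] 0 := by
  have := P.isProb
  have hm : (P.m : ℝ) ≠ 0 := by
    have := P.hm
    positivity
  have hS := P.S_pos hX0 n
  have hS' := P.S_pos hX0 (n + 1)
  have hSS : (P.S (n + 1) : ℝ) = P.S n + 2 * P.m := by
    unfold S
    push_cast
    ring
  have e : (fun ω => P.x (n + 1) ω - P.x n ω) =ᵐ[P.μ]
      ((P.S (n + 1) : ℝ)⁻¹) • (P.lin n (fun k => k + P.m) (fun k => k)
        - (2 * P.m : ℝ) • P.x n) := by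
    filter_upwards [P.ae_step n] with ω ⟨k, hk, h⟩
    have key : ∀ d : ℝ, (P.X (n + 1) ω : ℝ) = P.X n ω + d →
        P.x (n + 1) ω - P.x n ω = (P.S (n + 1) : ℝ)⁻¹ * (d - 2 * P.m * P.x n ω) := by
      intro d hd
      unfold x
      rw [hd]
      field_simp
      rw [hSS]
      ring
    rcases h with h | h
    · simp only [Pi.smul_apply, Pi.sub_apply, smul_eq_mul]
      rw [P.lin_red n _ _ k hk ω h]
      refine key _ ?_
      rw [h.2]
      push_cast
      ring
    · simp only [Pi.smul_apply, Pi.sub_apply, smul_eq_mul]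
      rw [P.lin_blue n _ _ k hk ω h]
      refine key _ ?_
      rw [h.2]
      push_cast
      ring
  refine (condExp_congr_ae e).trans ?_
  filter_upwards [condExp_smul (μ := P.μ) ((P.S (n + 1) : ℝ)⁻¹)
      (P.lin n (fun k => k + P.m) (fun k => k) - (2 * P.m : ℝ) • P.x n) (P.F n),
    condExp_sub (P.int_lin n (fun k => k + P.m) (fun k => k))
      ((P.int_x n).smul (2 * P.m : ℝ)) (P.F n),
    P.cond_lin n (fun k => k + P.m) (fun k => k)] with ω e0 e1 e2
  rw [e0, Pi.smul_apply, e1, Pi.sub_apply, e2,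
    condExp_of_stronglyMeasurable (P.F.le n)
      ((P.mx n).const_smul (2 * P.m : ℝ)).stronglyMeasurable ((P.int_x n).smul (2 * P.m : ℝ))]
  have h := bern_sum_k P.m (P.x n ω)
  have : ∑ k ∈ Finset.range (P.m + 1), (((k : ℝ) + P.m) * (P.q n k ω * P.p k)
      + (k : ℝ) * (P.q n k ω * (1 - P.p k))) = 2 * (P.m * P.x n ω) := by
    rw [← h, Finset.mul_sum]
    refine Finset.sum_congr rfl fun k hk => ?_
    rw [hlin k (Nat.lt_succ_iff.mp (Finset.mem_range.mp hk))]
    unfold q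
    field_simp
    ring
  rw [this]
  simp
  right
  ring

theorem bd_A (n : ℕ) :
    ∀ᵐ ω ∂P.μ, |(P.A (n + 1) ω : ℝ) - P.A n ω - P.x n ω| ≤ 1 := by
  filter_upwards [P.ae_step n] with ω ⟨k, hk, h⟩
  have h0 := P.x_nonneg n ω
  have h1 := P.x_le_one n ω
  rcases h with h | h <;> rw [h.1, abs_le] <;> push_cast <;> constructor <;> linarith

theorem bd_X (hX0 : 0 < P.X0) (n : ℕ) :
    ∀ᵐ ω ∂P.μ, |P.x (n + 1) ω - P.x n ω| ≤ 1 / ((n : ℝ) + 1) := by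
  filter_upwards [P.ae_step n] with ω ⟨k, hk, h⟩
  have h0 := P.x_nonneg n ω
  have h1 := P.x_le_one n ω
  have hm : (0 : ℝ) < P.m := by exact_mod_cast P.hm
  have hS := P.S_pos hX0 n
  have hS' := P.S_pos hX0 (n + 1)
  have hSS : (P.S (n + 1) : ℝ) = P.S n + 2 * P.m := by
    unfold S
    push_cast
    ring
  have hSn : 2 * P.m * ((n : ℝ) + 1) ≤ P.S (n + 1) := by
    unfold S
    push_cast
    have : (0 : ℝ) ≤ P.X0 := by positivity
    have : (0 : ℝ) ≤ P.Y0 := by positivity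
    linarith
  have hd : ∃ d : ℝ, (P.X (n + 1) ω : ℝ) = P.X n ω + d ∧ 0 ≤ d ∧ d ≤ 2 * P.m := by
    have hk' : (k : ℝ) ≤ P.m := by exact_mod_cast hk
    rcases h with h | h
    · refine ⟨k + P.m, ?_, by positivity, by linarith⟩
      rw [h.2]
      push_cast
      ring
    · refine ⟨k, ?_, by positivity, by linarith⟩
      rw [h.2]
      push_cast
      ring
  obtain ⟨d, hd, hd0, hd1⟩ := hd
  have key : P.x (n + 1) ω - P.x n ω = (d - 2 * P.m * P.x n ω) / (P.S (n + 1) : ℝ) := by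
    unfold x
    rw [hd]
    field_simp
    rw [hSS]
    ring
  rw [key, abs_div, abs_of_pos hS', div_le_div_iff₀ hS' (by positivity)]
  have : |d - 2 * P.m * P.x n ω| ≤ 2 * P.m := by
    rw [abs_le]
    constructor <;> nlinarith
  calc |d - 2 * P.m * P.x n ω| * ((n : ℝ) + 1) ≤ 2 * P.m * ((n : ℝ) + 1) := by gcongr
    _ ≤ 1 * P.S (n + 1) := by linarith

/-- Reachability. -/
theorem reach (hlin : ∀ k ≤ P.m, P.p k = (k : ℝ) / P.m) (hX0 : 0 < P.X0) (hY0 : 0 < P.Y0)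
    (N : ℕ) : ∀ j ≤ N, 0 < P.μ {ω | P.X N ω = P.X0 + 2 * P.m * j} := by
  have := P.isProb
  have hm : (0 : ℝ) < P.m := by exact_mod_cast P.hm
  induction N with
  | zero =>
    intro j hj
    have : j = 0 := by omega
    subst this
    have : {ω | P.X 0 ω = P.X0 + 2 * P.m * 0} = Set.univ := by
      ext ω
      simp [P.hX0 ω]
    rw [this]
    simp
  | succ N ih =>
    have gen : ∀ j ≤ N, ∀ (s : Set Ω) (c : ℝ), MeasurableSet s → 0 < c →
        (∀ᵐ ω ∂P.μ, P.X N ω = P.X0 + 2 * P.m * j →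
          (P.μ[s.indicator (fun _ => (1 : ℝ)) | P.F N]) ω = c) →
        0 < P.μ ({ω | P.X N ω = P.X0 + 2 * P.m * j} ∩ s) := by
      intro j hj s c hs hc h
      have hE : MeasurableSet[P.F N] {ω | P.X N ω = P.X0 + 2 * P.m * j} :=
        (P.adaptedX N) (measurableSet_singleton _)
      have hE' := P.F.le N _ hE
      have h1 := setIntegral_condExp (P.F.le N) (P.int_ind hs) hE
      rw [setIntegral_congr_ae (g := fun _ => c) hE' h] at h1
      have h2 := (measReal_pos P.μ _).mpr (ih j hj)
      rw [show (∫ ω in {ω | P.X N ω = P.X0 + 2 * P.m * j}, s.indicator (fun _ => (1 : ℝ)) ω ∂P.μ)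
        = _ from integral_indicator_one hs] at h1
      simp only [integral_const, measureReal_restrict_apply_univ, smul_eq_mul] at h1
      rw [measureReal_restrict_apply hs] at h1
      have h3 : 0 < P.μ.real (s ∩ {ω | P.X N ω = P.X0 + 2 * P.m * j}) := by
        rw [← h1]
        positivity
      rw [Set.inter_comm]
      exact (measReal_pos P.μ _).mp h3
    intro j hj
    have hxv : ∀ j ≤ N, 0 < ((P.X0 + 2 * P.m * j : ℕ) : ℝ) / P.S N ∧
        ((P.X0 + 2 * P.m * j : ℕ) : ℝ) / P.S N < 1 := by
      intro j hj
      have hS := P.S_pos hX0 N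
      refine ⟨div_pos (by exact_mod_cast (by omega)) hS, (div_lt_one hS).mpr ?_⟩
      have : 2 * P.m * j ≤ 2 * P.m * N := Nat.mul_le_mul_left _ hj
      have : P.X0 + 2 * P.m * j < P.S N := by unfold S; omega
      exact_mod_cast this
    by_cases hjN : j ≤ N
    · have := gen j hjN (P.blueE N 0) ((1 - ((P.X0 + 2 * P.m * j : ℕ) : ℝ) / P.S N) ^ P.m)
        (P.mblue N 0) (pow_pos (by linarith [(hxv j hjN).2]) _) (by
          filter_upwards [P.cblue N 0 (Nat.zero_le _)] with ω h hx
          rw [h, hlin 0 (Nat.zero_le _)]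
          simp [q, x, hx])
      refine this.trans_le (measure_mono ?_)
      rintro ω ⟨h1, h2⟩
      have h1' : P.X N ω = P.X0 + 2 * P.m * j := h1
      have h3 := h2.2
      show P.X (N + 1) ω = _
      omega
    · have hj' : j = N + 1 := by omega
      subst hj'
      have := gen N le_rfl (P.redE N P.m) ((((P.X0 + 2 * P.m * N : ℕ) : ℝ) / P.S N) ^ P.m)
        (P.mred N _) (pow_pos (hxv N le_rfl).1 _) (by
          filter_upwards [P.cred N P.m le_rfl] with ω h hx
          rw [h, hlin P.m le_rfl]
          simp [q, x, hx, hm.ne'])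
      refine this.trans_le (measure_mono ?_)
      rintro ω ⟨h1, h2⟩
      have h1' : P.X N ω = P.X0 + 2 * P.m * N := h1
      have h3 := h2.2
      show P.X (N + 1) ω = _
      rw [h3, h1']
      ring

/-- Second moment bound for the degree fraction after time `N`. -/
theorem second_x (hlin : ∀ k ≤ P.m, P.p k = (k : ℝ) / P.m) (hX0 : 0 < P.X0)
    (N : ℕ) (hN : 1 ≤ N) (E : Set Ω) (hE : MeasurableSet[P.F N] E) (t : ℝ)
    (ht : ∀ ω ∈ E, P.x N ω = t) (k : ℕ) :
    ∫ ω in E, (P.x (N + k) ω - t) ^ 2 ∂P.μ ≤ (1 / N - 1 / (N + k)) * P.μ.real E := by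
  have := P.isProb
  have hN' : (0 : ℝ) < N := by exact_mod_cast hN
  induction k with
  | zero =>
    have : ∫ ω in E, (P.x (N + 0) ω - t) ^ 2 ∂P.μ = ∫ ω in E, (0 : ℝ) ∂P.μ := by
      refine setIntegral_congr_fun (P.F.le N _ hE) fun ω hω => ?_
      simp [ht ω hω]
    rw [this]
    simp
  | succ k ih =>
    have mx1 : Measurable (P.x (N + k)) := (P.mx _).mono (P.F.le _) le_rfl
    have mx2 : Measurable (P.x (N + k + 1)) := (P.mx _).mono (P.F.le _) le_rfl
    have h := var_step (P.F (N + k)) P.μ (P.F.le _) E (P.F.mono (Nat.le_add_right N k) _ hE)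
      (fun ω => P.x (N + k) ω - t) (fun ω => P.x (N + k + 1) ω - P.x (N + k) ω)
      ((P.mx _).sub_const t) (mx2.sub mx1) (1 / (((N + k : ℕ) : ℝ) + 1)) (1 + |t|)
      (Filter.Eventually.of_forall fun ω => by
        refine (abs_sub _ _).trans ?_
        rw [abs_of_nonneg (P.x_nonneg _ ω)]
        linarith [P.x_le_one (N + k) ω])
      (P.bd_X hX0 _) (P.cond_X hlin hX0 _)
    have e : ∀ ω, P.x (N + k) ω - t + (P.x (N + k + 1) ω - P.x (N + k) ω)
        = P.x (N + (k + 1)) ω - t := by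
      intro ω
      rw [← add_assoc]
      ring
    simp only [e] at h
    refine h.trans ((add_le_add_left ih _).trans ?_)
    rw [← add_mul]
    refine mul_le_mul_of_nonneg_right ?_ (by positivity)
    push_cast
    have hk : (0 : ℝ) < (N : ℝ) + k := by positivity
    have : (1 / ((N : ℝ) + k + 1)) ^ 2 ≤ 1 / (N + k) - 1 / (N + (k + 1)) := by
      have e2 : 1 / ((N : ℝ) + k) - 1 / (N + (k + 1)) = 1 / ((N + k) * (N + k + 1)) := by
        field_simp
        ring
      rw [e2, div_pow, one_pow]
      refine one_div_le_one_div_of_le (by positivity) ?_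
      nlinarith
    linarith

/-- The compensated red count. -/
def Z (N k : ℕ) (ω : Ω) : ℝ :=
  (P.A (N + k) ω : ℝ) - P.A N ω - ∑ i ∈ Finset.range k, P.x (N + i) ω

theorem Z_succ (N k : ℕ) (ω : Ω) :
    P.Z N (k + 1) ω = P.Z N k ω
      + ((P.A (N + k + 1) ω : ℝ) - P.A (N + k) ω - P.x (N + k) ω) := by
  unfold Z
  rw [Finset.sum_range_succ, ← add_assoc]
  ring

theorem mZ (N k : ℕ) : Measurable[P.F (N + k)] (P.Z N k) := by
  unfold Z
  refine ((P.mAr _).sub ((P.mAr N).mono (P.F.mono (Nat.le_add_right N k)) le_rfl)).sub ?_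
  refine Finset.measurable_fun_sum _ fun i hi => ?_
  refine (P.mx (N + i)).mono (P.F.mono ?_) le_rfl
  have := Finset.mem_range.mp hi
  omega

theorem bd_Z (N k : ℕ) : ∀ᵐ ω ∂P.μ, |P.Z N k ω| ≤ k := by
  induction k with
  | zero => simp [Z]
  | succ k ih =>
    filter_upwards [ih, P.bd_A (N + k)] with ω h1 h2
    rw [Z_succ]
    push_cast
    exact (abs_add_le _ _).trans (add_le_add h1 h2)

theorem second_Z (hlin : ∀ k ≤ P.m, P.p k = (k : ℝ) / P.m)
    (N : ℕ) (E : Set Ω) (hE : MeasurableSet[P.F N] E) (k : ℕ) :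
    ∫ ω in E, (P.Z N k ω) ^ 2 ∂P.μ ≤ k * P.μ.real E := by
  have := P.isProb
  induction k with
  | zero => simp [Z]
  | succ k ih =>
    have a1 := (P.mAr (N + k)).mono (P.F.le _) le_rfl
    have a2 := (P.mAr (N + k + 1)).mono (P.F.le _) le_rfl
    have a3 := (P.mx (N + k)).mono (P.F.le _) le_rfl
    have h := var_step (P.F (N + k)) P.μ (P.F.le _) E (P.F.mono (Nat.le_add_right N k) _ hE)
      (P.Z N k) (fun ω => (P.A (N + k + 1) ω : ℝ) - P.A (N + k) ω - P.x (N + k) ω)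
      (P.mZ N k) ((a2.sub a1).sub a3) 1 k (P.bd_Z N k) (P.bd_A _) (P.cond_A hlin _)
    simp only [← Z_succ] at h
    push_cast
    linarith

/-- Second moment bound for the red count after time `N`. -/
theorem second_W (hlin : ∀ k ≤ P.m, P.p k = (k : ℝ) / P.m) (hX0 : 0 < P.X0)
    (N : ℕ) (hN : 1 ≤ N) (E : Set Ω) (hE : MeasurableSet[P.F N] E) (t : ℝ)
    (ht : ∀ ω ∈ E, P.x N ω = t) (k : ℕ) (hk : N ≤ k) :
    IntegrableOn (fun ω => (((P.A (N + k) ω : ℝ) - P.A N ω) / k - t) ^ 2) E P.μ ∧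
    ∫ ω in E, (((P.A (N + k) ω : ℝ) - P.A N ω) / k - t) ^ 2 ∂P.μ ≤ 4 / N * P.μ.real E := by
  have := P.isProb
  have hN' : (0 : ℝ) < N := by exact_mod_cast hN
  have hk' : (N : ℝ) ≤ k := by exact_mod_cast hk
  have hk0 : (0 : ℝ) < k := by linarith
  have mZ' : Measurable (P.Z N k) := (P.mZ N k).mono (P.F.le _) le_rfl
  have mxx : ∀ i, Measurable (P.x i) := fun i => (P.mx i).mono (P.F.le _) le_rfl
  have iZ : Integrable (fun ω => (P.Z N k ω) ^ 2) P.μ := by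
    refine Integrable.of_bound (by fun_prop) ((k : ℝ) ^ 2) ?_
    filter_upwards [P.bd_Z N k] with ω h
    rw [Real.norm_eq_abs, abs_pow]
    exact pow_le_pow_left₀ (abs_nonneg _) h 2
  have ix : ∀ i, Integrable (fun ω => (P.x i ω - t) ^ 2) P.μ := by
    intro i
    have := mxx i
    refine Integrable.of_bound (by fun_prop) ((1 + |t|) ^ 2) ?_
    refine Filter.Eventually.of_forall fun ω => ?_
    rw [Real.norm_eq_abs, abs_pow]
    refine pow_le_pow_left₀ (abs_nonneg _) ?_ 2
    refine (abs_sub _ _).trans ?_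
    rw [abs_of_nonneg (P.x_nonneg _ ω)]
    linarith [P.x_le_one i ω]
  let g : Ω → ℝ := fun ω => 2 / (k : ℝ) ^ 2 * (P.Z N k ω) ^ 2
    + 2 / (k : ℝ) * ∑ i ∈ Finset.range k, (P.x (N + i) ω - t) ^ 2
  have is : Integrable (fun ω => ∑ i ∈ Finset.range k, (P.x (N + i) ω - t) ^ 2) P.μ :=
    integrable_finsetSum _ fun i _ => ix (N + i)
  have ig : Integrable g P.μ := (iZ.const_mul _).add (is.const_mul _)
  have hle : ∀ ω, (((P.A (N + k) ω : ℝ) - P.A N ω) / k - t) ^ 2 ≤ g ω := by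
    intro ω
    have e : ((P.A (N + k) ω : ℝ) - P.A N ω) / k - t
        = P.Z N k ω / k + (∑ i ∈ Finset.range k, (P.x (N + i) ω - t)) / k := by
      rw [Finset.sum_sub_distrib]
      unfold Z
      simp
      field_simp
      ring
    have h1 := sq_sum_le_card_mul_sum_sq (s := Finset.range k)
      (f := fun i => P.x (N + i) ω - t)
    rw [Finset.card_range] at h1
    rw [e]
    refine (add_sq_le).trans ?_
    have h2 : ((∑ i ∈ Finset.range k, (P.x (N + i) ω - t)) / k) ^ 2
        ≤ (∑ i ∈ Finset.range k, (P.x (N + i) ω - t) ^ 2) / k := by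
      rw [div_pow, div_le_div_iff₀ (by positivity) hk0]
      nlinarith
    have h3 : g ω = 2 * ((P.Z N k ω / k) ^ 2
        + (∑ i ∈ Finset.range k, (P.x (N + i) ω - t) ^ 2) / k) := by
      simp only [g]
      field_simp
    rw [h3]
    linarith
  have mW : Measurable (fun ω => (((P.A (N + k) ω : ℝ) - P.A N ω) / k - t) ^ 2) := by
    have a1 := (P.mAr (N + k)).mono (P.F.le _) le_rfl
    have a2 := (P.mAr N).mono (P.F.le _) le_rfl
    exact (((a1.sub a2).div_const _).sub_const t).pow_const 2
  have iW : Integrable (fun ω => (((P.A (N + k) ω : ℝ) - P.A N ω) / k - t) ^ 2) P.μ := by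
    refine ig.mono' mW.aestronglyMeasurable (Filter.Eventually.of_forall fun ω => ?_)
    rw [Real.norm_eq_abs, abs_of_nonneg (sq_nonneg _)]
    exact hle ω
  refine ⟨iW.integrableOn, ?_⟩
  have hμ : 0 ≤ P.μ.real E := by positivity
  have hs : ∑ i ∈ Finset.range k, ∫ ω in E, (P.x (N + i) ω - t) ^ 2 ∂P.μ
      ≤ k * (1 / N * P.μ.real E) := by
    have : ∀ i ∈ Finset.range k, ∫ ω in E, (P.x (N + i) ω - t) ^ 2 ∂P.μ
        ≤ 1 / N * P.μ.real E := by
      intro i _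
      refine (P.second_x hlin hX0 N hN E hE t ht i).trans ?_
      refine mul_le_mul_of_nonneg_right ?_ hμ
      have : (0 : ℝ) ≤ 1 / (N + i) := by positivity
      linarith
    simpa using Finset.sum_le_sum this
  calc ∫ ω in E, (((P.A (N + k) ω : ℝ) - P.A N ω) / k - t) ^ 2 ∂P.μ
      ≤ ∫ ω in E, g ω ∂P.μ := setIntegral_mono iW.integrableOn ig.integrableOn hle
    _ = 2 / (k : ℝ) ^ 2 * ∫ ω in E, (P.Z N k ω) ^ 2 ∂P.μ
        + 2 / (k : ℝ) * ∑ i ∈ Finset.range k, ∫ ω in E, (P.x (N + i) ω - t) ^ 2 ∂P.μ := by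
        rw [← integral_finsetSum _ fun i _ => (ix (N + i)).integrableOn,
          ← integral_const_mul, ← integral_const_mul,
          ← integral_add (iZ.const_mul _).integrableOn (is.const_mul _).integrableOn]
    _ ≤ 2 / (k : ℝ) ^ 2 * (k * P.μ.real E) + 2 / (k : ℝ) * (k * (1 / N * P.μ.real E)) := by
        gcongr
        exact P.second_Z hlin N E hE k
    _ = (2 / k + 2 / N) * P.μ.real E := by field_simp
    _ ≤ 4 / N * P.μ.real E := by
        refine mul_le_mul_of_nonneg_right ?_ hμ
        have : 2 / (k : ℝ) ≤ 2 / N := by gcongr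
        have e : 4 / (N : ℝ) = 2 / N + 2 / N := by ring
        linarith

/-- Reachable grid points are dense. -/
theorem exists_grid (c δ : ℝ) (hc0 : 0 < c) (hc1 : c < 1) (hδ : 0 < δ) (K : ℝ) :
    ∃ N j : ℕ, 1 ≤ N ∧ K < N ∧ j ≤ N ∧
      |((P.X0 + 2 * P.m * j : ℕ) : ℝ) / P.S N - c| < δ := by
  have hm : (1 : ℝ) ≤ P.m := by exact_mod_cast P.hm
  obtain ⟨N, hN⟩ := exists_nat_gt (max (max K 1)
    (((P.X0 : ℝ) + P.Y0 + 1 + 2 * P.m) / (2 * P.m * δ)))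
  have h1 : K < N := (le_max_left _ _).trans_lt ((le_max_left _ _).trans_lt hN)
  have h2 : (1 : ℝ) < N := (le_max_right _ _).trans_lt ((le_max_left _ _).trans_lt hN)
  have h3 := (le_max_right _ _).trans_lt hN
  rw [div_lt_iff₀ (by positivity)] at h3
  have hN0 : (0 : ℝ) < N := by linarith
  have hf1 := Nat.floor_le (a := c * N) (by positivity)
  have hf2 := Nat.lt_floor_add_one (c * (N : ℝ))
  refine ⟨N, ⌊c * (N : ℝ)⌋₊, by exact_mod_cast h2.le, h1, ?_, ?_⟩
  · have : (⌊c * (N : ℝ)⌋₊ : ℝ) ≤ N := by nlinarith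
    exact_mod_cast this
  · have hX : (0 : ℝ) ≤ P.X0 := by positivity
    have hY : (0 : ℝ) ≤ P.Y0 := by positivity
    have hmN : (0 : ℝ) < 2 * P.m * N := by positivity
    have hS : (P.S N : ℝ) = P.X0 + P.Y0 + 2 * P.m * N := by
      unfold S
      push_cast
      ring
    have hSp : (0 : ℝ) < P.S N := by rw [hS]; linarith
    set j := ⌊c * (N : ℝ)⌋₊
    have e : ((P.X0 + 2 * P.m * j : ℕ) : ℝ) / P.S N - c
        = (P.X0 * (1 - c) - c * P.Y0 - 2 * P.m * (c * N - j)) / P.S N := by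
      rw [eq_div_iff hSp.ne', sub_mul, div_mul_cancel₀ _ hSp.ne', hS]
      push_cast
      ring
    rw [e, abs_div, abs_of_pos hSp, div_lt_iff₀ hSp]
    have hb : |P.X0 * (1 - c) - c * P.Y0 - 2 * P.m * (c * N - j)|
        ≤ (P.X0 : ℝ) + P.Y0 + 2 * P.m := by
      have q1 : 0 ≤ c * N - j := by linarith
      have q2 : c * N - j ≤ 1 := by linarith
      rw [abs_le]
      constructor <;> nlinarith
    refine hb.trans_lt ?_
    rw [hS]
    nlinarith

end PAProcess

/-- **Linear model, full support.** In the linear model (`p_k = k/m` for all `0 ≤ k ≤ m`) with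
`X_0 > 0` and `Y_0 > 0`, the almost sure limit `a = lim a_n` has full support on `[0,1]`: for
every interval `(r, r+ε) ⊆ (0,1)` with `ε > 0`, one has `P(a ∈ (r, r+ε)) > 0`. -/
theorem linear_model_limit_full_support
    {Ω : Type} [MeasurableSpace Ω] (P : PAProcess Ω)
    (hlin : ∀ k ≤ P.m, P.p k = (k : ℝ) / P.m)
    (hX0 : 0 < P.X0) (hY0 : 0 < P.Y0)
    (L : Ω → ℝ)
    (hL : ∀ᵐ ω ∂P.μ, Tendsto (fun n => P.a n ω) atTop (nhds (L ω)))
    (r ε : ℝ) (hε : 0 < ε) (hsub : Set.Ioo r (r + ε) ⊆ Set.Ioo (0 : ℝ) 1) :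
    0 < P.μ {ω | L ω ∈ Set.Ioo r (r + ε)} := by
  have := P.isProb
  have hc : r + ε / 2 ∈ Set.Ioo (0 : ℝ) 1 := hsub ⟨by linarith, by linarith⟩
  obtain ⟨N, j, hN, hNK, hj, hd⟩ :=
    P.exists_grid (r + ε / 2) (ε / 4) hc.1 hc.2 (by linarith) (64 / ε ^ 2)
  set t : ℝ := ((P.X0 + 2 * P.m * j : ℕ) : ℝ) / P.S N with htdef
  set E : Set Ω := {ω | P.X N ω = P.X0 + 2 * P.m * j} with hEdef
  have hE : MeasurableSet[P.F N] E := (P.adaptedX N) (measurableSet_singleton _)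
  have hE' : MeasurableSet E := P.F.le N _ hE
  have hEpos : 0 < P.μ E := P.reach hlin hX0 hY0 N j hj
  have ht : ∀ ω ∈ E, P.x N ω = t := by
    intro ω hω
    have : P.X N ω = P.X0 + 2 * P.m * j := hω
    simp only [PAProcess.x, this, htdef]
  have hN0 : (0 : ℝ) < N := by exact_mod_cast hN
  by_contra hcon
  have hzero : P.μ {ω | L ω ∈ Set.Ioo r (r + ε)} = 0 := by
    simpa using hcon
  have hnot : ∀ᵐ ω ∂P.μ, L ω ∉ Set.Ioo r (r + ε) := by
    rw [ae_iff]
    simpa using hzero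
  let f : ℕ → Ω → ENNReal := fun k ω =>
    ENNReal.ofReal ((((P.A (N + k) ω : ℝ) - P.A N ω) / k - t) ^ 2)
  have mf : ∀ k, Measurable (f k) := by
    intro k
    have a1 := (P.mAr (N + k)).mono (P.F.le _) le_rfl
    have a2 := (P.mAr N).mono (P.F.le _) le_rfl
    exact ((((a1.sub a2).div_const _).sub_const t).pow_const 2).ennreal_ofReal
  have hfat := lintegral_liminf_le (μ := P.μ.restrict E) (u := atTop) mf
  have hup : liminf (fun k => ∫⁻ ω in E, f k ω ∂P.μ) atTop
      ≤ ENNReal.ofReal (4 / N * P.μ.real E) := by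
    refine liminf_le_of_frequently_le' (Filter.Eventually.frequently ?_)
    filter_upwards [eventually_ge_atTop N] with k hk
    obtain ⟨h1, h2⟩ := P.second_W hlin hX0 N hN E hE t ht k hk
    have : ∫⁻ ω in E, f k ω ∂P.μ = ENNReal.ofReal
        (∫ ω in E, (((P.A (N + k) ω : ℝ) - P.A N ω) / k - t) ^ 2 ∂P.μ) :=
      (ofReal_integral_eq_lintegral_ofReal h1
        (Filter.Eventually.of_forall fun ω => sq_nonneg _)).symm
    rw [this]
    exact ENNReal.ofReal_le_ofReal h2
  have hlow : ∀ᵐ ω ∂P.μ.restrict E,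
      ENNReal.ofReal ((ε / 4) ^ 2) ≤ liminf (fun k => f k ω) atTop := by
    refine ae_restrict_of_ae ?_
    filter_upwards [hnot, hL] with ω hω hlim
    have h1 : Tendsto (fun k : ℕ => ((P.A (N + k) ω : ℝ) - P.A N ω) / k) atTop
        (nhds (L ω)) := by
      have hl : Tendsto (fun k : ℕ => P.a (N + k) ω) atTop (nhds (L ω)) := by
        have := hlim.comp (tendsto_add_atTop_nat N)
        refine this.congr fun k => ?_
        simp [add_comm]
      have h2 : Tendsto (fun k : ℕ => P.a (N + k) ω * (1 + ((P.A0 : ℝ) + P.B0 + N) / k)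
          - (P.A N ω : ℝ) / k) atTop (nhds (L ω * (1 + 0) - 0)) :=
        (hl.mul (tendsto_const_nhds.add (tendsto_const_div_atTop_nhds_zero_nat _))).sub
          (tendsto_const_div_atTop_nhds_zero_nat _)
      rw [add_zero, mul_one, sub_zero] at h2
      refine h2.congr' ?_
      filter_upwards [eventually_gt_atTop 0] with k hk
      have hk0 : (0 : ℝ) < k := by exact_mod_cast hk
      have hden : (P.A0 : ℝ) + P.B0 + (N + k) ≠ 0 := by positivity
      unfold PAProcess.a
      push_cast
      field_simp
      ring
    have h3 : Tendsto (fun k => f k ω) atTop (nhds (ENNReal.ofReal ((L ω - t) ^ 2))) :=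
      (ENNReal.continuous_ofReal.tendsto _).comp ((h1.sub_const t).pow 2)
    rw [h3.liminf_eq]
    refine ENNReal.ofReal_le_ofReal ?_
    have h4 : ε / 4 ≤ |L ω - t| := by
      by_contra hlt
      push Not at hlt
      rw [abs_lt] at hlt hd
      exact hω ⟨by linarith, by linarith⟩
    rw [← sq_abs (L ω - t)]
    exact pow_le_pow_left₀ (by linarith) h4 2
  have hfin : ENNReal.ofReal ((ε / 4) ^ 2) * P.μ E ≤ ENNReal.ofReal (4 / N * P.μ.real E) := by
    calc ENNReal.ofReal ((ε / 4) ^ 2) * P.μ E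
        = ∫⁻ ω in E, ENNReal.ofReal ((ε / 4) ^ 2) ∂P.μ := by simp
      _ ≤ ∫⁻ ω in E, liminf (fun k => f k ω) atTop ∂P.μ := lintegral_mono_ae hlow
      _ ≤ _ := hfat.trans hup
  have hreal : 0 < P.μ.real E := (measReal_pos P.μ _).mpr hEpos
  rw [← ofReal_measureReal (measure_ne_top _ _), ← ENNReal.ofReal_mul (by positivity),
    ENNReal.ofReal_le_ofReal_iff (by positivity)] at hfin
  have h5 := le_of_mul_le_mul_right hfin hreal
  rw [div_lt_iff₀ (by positivity)] at hNK
  rw [le_div_iff₀ hN0] at h5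
  nlinarith
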